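/- Suppose H ≤ PL₊(I) is generated by a finite set Z of nice generators, and let S_Z be the set of signed orbitals associated to the elements of Z. Then H is soluble, and the derived length of H equals the largest height of a tower of signed orbitals contained in S_Z. -/

import Mathlib

open Set

namespace PLPaper

/-- We model `PL₊(I)` inside the group of bijections of `ℝ` with *opposite*
composition, so that the group acts on `ℝ` on the right:
`x · (g * h) = (x · g) · h`. -/
abbrev PermR : Type := (Equiv.Perm ℝ)ᵐᵒᵖ

/-- The (right) action of `g` on the point `x`. -/
def ap (g : PermR) (x : ℝ) : ℝ := g.unop x

/-- `g` is affine on a neighbourhood of `x`. -/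
def IsLocallyAffineAt (g : PermR) (x : ℝ) : Prop :=
  ∃ m b : ℝ, ∀ᶠ y in nhds x, ap g y = m * y + b

/-- The breakpoints of `g`: points of `(0,1)` where `g` is not locally affine
(equivalently, for a PL map, where the derivative fails to exist). -/
def Breakpoints (g : PermR) : Set ℝ :=
  {x ∈ Ioo (0:ℝ) 1 | ¬ IsLocallyAffineAt g x}

/-- `g` is an orientation-preserving piecewise-linear homeomorphism of `[0,1]`
(extended by the identity to all of `ℝ`), with finitely many breakpoints. -/
def IsPL (g : PermR) : Prop :=
  StrictMono (ap g) ∧ (∀ x ∉ Ioo (0:ℝ) 1, ap g x = x) ∧ (Breakpoints g).Finite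

/-- The support of `g`. -/
def Supp (g : PermR) : Set ℝ := {x | ap g x ≠ x}

/-- `(a,b)` is an orbital of `g`, i.e. a connected component of `Supp g`. -/
def IsOrbital (g : PermR) (a b : ℝ) : Prop :=
  a < b ∧ Ioo a b ⊆ Supp g ∧ a ∉ Supp g ∧ b ∉ Supp g

/-- The support of a subgroup `G`. -/
def GSupp (G : Subgroup PermR) : Set ℝ := ⋃ g ∈ (G : Set PermR), Supp g

/-- `(a,b)` is an orbital of the group `G`, i.e. a connected component of its support. -/
def IsGroupOrbital (G : Subgroup PermR) (a b : ℝ) : Prop :=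
  a < b ∧ Ioo a b ⊆ GSupp G ∧ a ∉ GSupp G ∧ b ∉ GSupp G

/-- The pair `g, h` carries a transition chain: orbitals `(a,b)` of `g` and
`(c,d)` of `h` with `a < c < b < d`. -/
def ElemsTransitionChain (g h : PermR) : Prop :=
  ∃ a b c d : ℝ, IsOrbital g a b ∧ IsOrbital h c d ∧ a < c ∧ c < b ∧ b < d

/-- The pair `g, h` carries a one-sided overlap: orbitals `(a,b)` of `g` and
`(a,c)` of `h`, or `(a,b)` of `g` and `(c,b)` of `h`, where `a < c < b`. -/
def ElemsOneSidedOverlap (g h : PermR) : Prop :=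
  ∃ a b c : ℝ, a < c ∧ c < b ∧
    ((IsOrbital g a b ∧ IsOrbital h a c) ∨ (IsOrbital g a b ∧ IsOrbital h c b))

def AdmitsTransitionChain (G : Subgroup PermR) : Prop :=
  ∃ g ∈ G, ∃ h ∈ G, ElemsTransitionChain g h

def AdmitsOneSidedOverlap (G : Subgroup PermR) : Prop :=
  ∃ g ∈ G, ∃ h ∈ G, ElemsOneSidedOverlap g h

/-- `G` admits a bad overlap: orbitals `A` of `f ∈ G` and `B` of `g ∈ G` which
intersect, are distinct, and neither closure is contained in the other orbital. -/
def AdmitsBadOverlap (G : Subgroup PermR) : Prop :=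
  ∃ f ∈ G, ∃ g ∈ G, ∃ a b c d : ℝ, IsOrbital f a b ∧ IsOrbital g c d ∧
    (Ioo a b ∩ Ioo c d).Nonempty ∧ Ioo a b ≠ Ioo c d ∧
    ¬ Icc a b ⊆ Ioo c d ∧ ¬ Icc c d ⊆ Ioo a b

/-- A tower: a set of signed orbitals `((a,b), g)` with pairwise nested orbitals,
where equal orbitals force equal signatures. -/
def IsTower (T : Set ((ℝ × ℝ) × PermR)) : Prop :=
  (∀ p ∈ T, IsOrbital p.2 p.1.1 p.1.2) ∧
  (∀ p ∈ T, ∀ q ∈ T,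
      Ioo p.1.1 p.1.2 ⊆ Ioo q.1.1 q.1.2 ∨ Ioo q.1.1 q.1.2 ⊆ Ioo p.1.1 p.1.2) ∧
  (∀ p ∈ T, ∀ q ∈ T, p.1 = q.1 → p.2 = q.2)

/-- `G` admits the tower `T` if `T` is a tower all of whose signatures lie in `G`. -/
def AdmitsTower (G : Subgroup PermR) (T : Set ((ℝ × ℝ) × PermR)) : Prop :=
  IsTower T ∧ ∀ p ∈ T, p.2 ∈ G

def AdmitsInfiniteTower (G : Subgroup PermR) : Prop :=
  ∃ T : Set ((ℝ × ℝ) × PermR), AdmitsTower G T ∧ T.Infinite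

/-- The set of breakpoints of the elements of a set `S`. -/
def BreakSet (S : Set PermR) : Set ℝ := ⋃ g ∈ S, Breakpoints g

/-- The derived length of a group: the least `n` with `derivedSeries G n = ⊥`. -/
noncomputable def derivedLength (G : Type*) [Group G] : ℕ :=
  sInf {n : ℕ | derivedSeries G n = ⊥}

/-- `Z` is a set of nice generators:
(Z0) each `h ∈ Z` has exactly one orbital;
(Z1) no pair of elements of `Z` forms a transition chain or a one-sided overlap;
(Z2) distinct elements of `Z` have distinct orbitals;
(Z3) for each `h ∈ Z` there is `r ∈ A_h` such that every orbital of an element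
of `Z` properly contained in `A_h` is contained in `(r, r·h)`. -/
def IsNiceSet (Z : Set PermR) : Prop :=
  (∀ h ∈ Z, (∃ a b : ℝ, IsOrbital h a b) ∧
    ∀ a b a' b' : ℝ, IsOrbital h a b → IsOrbital h a' b' → a = a' ∧ b = b') ∧
  (∀ g ∈ Z, ∀ h ∈ Z, ¬ ElemsTransitionChain g h ∧ ¬ ElemsOneSidedOverlap g h) ∧
  (∀ g ∈ Z, ∀ h ∈ Z, g ≠ h → ∀ a b : ℝ, IsOrbital g a b → ¬ IsOrbital h a b) ∧
  (∀ h ∈ Z, ∀ a b : ℝ, IsOrbital h a b → ∃ r ∈ Ioo a b,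
    ∀ h' ∈ Z, ∀ a' b' : ℝ, IsOrbital h' a' b' → Ioo a' b' ⊂ Ioo a b →
      Ioo a' b' ⊆ Ioo r (ap h r))

/-- The set of signed orbitals associated to the elements of `Z`. -/
def SignedOrbitals (Z : Set PermR) : Set ((ℝ × ℝ) × PermR) :=
  {p | p.2 ∈ Z ∧ IsOrbital p.2 p.1.1 p.1.2}

open scoped commutatorElement

/-! ### Derived series inside an ambient group -/

/-- Internal derived series of a subgroup. -/
def dS {G : Type*} [Group G] (K : Subgroup G) : ℕ → Subgroup G
  | 0 => K
  | n + 1 => ⁅dS K n, dS K n⁆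

theorem dS_map_subtype {G : Type*} [Group G] (K : Subgroup G) (n : ℕ) :
    (derivedSeries K n).map K.subtype = dS K n := by
  induction n with
  | zero => rw [derivedSeries_zero, ← MonoidHom.range_eq_map, Subgroup.range_subtype]; rfl
  | succ n ih => rw [derivedSeries_succ, Subgroup.map_commutator, ih]; rfl

theorem dS_eq_bot_iff {G : Type*} [Group G] (K : Subgroup G) (n : ℕ) :
    derivedSeries K n = ⊥ ↔ dS K n = ⊥ := by
  rw [← dS_map_subtype, Subgroup.map_eq_bot_iff_of_injective _ K.subtype_injective]

theorem dS_mono {G : Type*} [Group G] {K L : Subgroup G} (h : K ≤ L) (n : ℕ) :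
    dS K n ≤ dS L n := by
  induction n with
  | zero => exact h
  | succ n ih => exact Subgroup.commutator_mono ih ih

theorem dS_succ' {G : Type*} [Group G] (K : Subgroup G) (n : ℕ) :
    dS K (n + 1) = dS ⁅K, K⁆ n := by
  induction n with
  | zero => rfl
  | succ n ih =>
    change ⁅dS K (n+1), dS K (n+1)⁆ = ⁅dS ⁅K, K⁆ n, dS ⁅K, K⁆ n⁆
    rw [ih]

theorem dS_map {G G' : Type*} [Group G] [Group G'] (f : G →* G') (K : Subgroup G) (n : ℕ) :
    dS (K.map f) n = (dS K n).map f := by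
  induction n with
  | zero => rfl
  | succ n ih =>
    change ⁅dS (K.map f) n, dS (K.map f) n⁆ = Subgroup.map f ⁅dS K n, dS K n⁆
    rw [Subgroup.map_commutator, ih]

theorem dS_succ_le {G : Type*} [Group G] (K : Subgroup G) (n : ℕ) : dS K (n + 1) ≤ dS K n := by
  induction n with
  | zero => exact Subgroup.commutator_le_self K
  | succ n ih => exact Subgroup.commutator_mono ih ih

theorem dS_anti {G : Type*} [Group G] (K : Subgroup G) : Antitone (dS K) :=
  antitone_nat_of_succ_le (dS_succ_le K)

theorem dS_le {G : Type*} [Group G] (K : Subgroup G) (n : ℕ) : dS K n ≤ K :=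
  dS_anti K (Nat.zero_le n)

/-- If a generating set normalises `N` and its commutators lie in `N`, then so do all. -/
theorem commutator_closure_le {G : Type*} [Group G] (S : Set G) (N : Subgroup G)
    (hn : ∀ s ∈ S, ∀ x ∈ N, s * x * s⁻¹ ∈ N ∧ s⁻¹ * x * s ∈ N)
    (hc : ∀ s ∈ S, ∀ t ∈ S, ⁅s, t⁆ ∈ N) :
    ⁅Subgroup.closure S, Subgroup.closure S⁆ ≤ N := by
  have hnorm : ∀ s ∈ Subgroup.closure S, ∀ x ∈ N, s * x * s⁻¹ ∈ N ∧ s⁻¹ * x * s ∈ N := by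
    intro s hs
    induction hs using Subgroup.closure_induction with
    | mem s hs => exact hn s hs
    | one => intro x hx; simpa using hx
    | mul a b _ _ iha ihb =>
      intro x hx
      refine ⟨?_, ?_⟩
      · have := (iha _ (ihb x hx).1).1
        convert this using 1; group
      · have := (ihb _ (iha x hx).2).2
        convert this using 1; group
    | inv a _ iha =>
      intro x hx
      refine ⟨?_, ?_⟩
      · simpa using (iha x hx).2
      · simpa using (iha x hx).1
  have h1 : ∀ s ∈ S, ∀ t ∈ Subgroup.closure S, ⁅s, t⁆ ∈ N := by
    intro s hs t ht
    induction ht using Subgroup.closure_induction with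
    | mem t ht => exact hc s hs t ht
    | one => simp
    | mul a b ha hb iha ihb =>
      have := N.mul_mem iha (hnorm a ha _ ihb).1
      convert this using 1
      simp only [commutatorElement_def]; group
    | inv a ha iha =>
      have := (hnorm a ha _ (N.inv_mem iha)).2
      convert this using 1
      simp only [commutatorElement_def]; group
  rw [Subgroup.commutator_le]
  intro s hs t ht
  induction hs using Subgroup.closure_induction with
  | mem s hs => exact h1 s hs t ht
  | one => simp
  | mul a b ha hb iha ihb =>
    have := N.mul_mem (hnorm a ha _ ihb).1 iha
    convert this using 1
    simp only [commutatorElement_def]; group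
  | inv a ha iha =>
    have := (hnorm a ha _ (N.inv_mem iha)).2
    convert this using 1
    simp only [commutatorElement_def]; group

theorem commutator_iSup_le {G ι : Type*} [Group G] (A : ι → Subgroup G)
    (hA : ∀ i j, i ≠ j → ∀ x ∈ A i, ∀ y ∈ A j, x * y = y * x) :
    ⁅⨆ i, A i, ⨆ i, A i⁆ ≤ ⨆ i, ⁅A i, A i⁆ := by
  have hle : ∀ i, ⁅A i, A i⁆ ≤ ⨆ i, ⁅A i, A i⁆ := fun i => le_iSup (fun i => ⁅A i, A i⁆) i
  have key : ∀ i, ∀ s ∈ A i, ∀ x ∈ ⨆ i, ⁅A i, A i⁆, s * x * s⁻¹ ∈ ⨆ i, ⁅A i, A i⁆ := by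
    intro i s hs x hx
    induction hx using Subgroup.iSup_induction' with
    | hp j x hx =>
      by_cases hij : i = j
      · subst hij
        refine hle i ?_
        have hx' : x ∈ A i := Subgroup.commutator_le_self _ hx
        have h1 : ⁅s, x⁆ ∈ ⁅A i, A i⁆ := Subgroup.commutator_mem_commutator hs hx'
        have := mul_mem h1 hx
        convert this using 1
        simp only [commutatorElement_def]; group
      · have hx' : x ∈ A j := Subgroup.commutator_le_self _ hx
        rw [hA i j hij s hs x hx', mul_inv_cancel_right]
        exact hle j hx
    | h1 => simp
    | hmul x y _ _ ihx ihy =>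
      have := mul_mem ihx ihy
      convert this using 1; group
  have e : (⨆ i, A i) = Subgroup.closure (⋃ i, (A i : Set G)) := by
    rw [Subgroup.closure_iUnion]; simp
  rw [e]
  apply commutator_closure_le
  · intro s hs x hx
    obtain ⟨i, hi⟩ := Set.mem_iUnion.1 hs
    exact ⟨key i s hi x hx, by simpa using key i s⁻¹ (inv_mem hi) x hx⟩
  · intro s hs t ht
    obtain ⟨i, hi⟩ := Set.mem_iUnion.1 hs
    obtain ⟨j, hj⟩ := Set.mem_iUnion.1 ht
    by_cases hij : i = j
    · subst hij
      exact hle i (Subgroup.commutator_mem_commutator hi hj)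
    · have : ⁅s, t⁆ = 1 := commutatorElement_eq_one_iff_mul_comm.2 (hA i j hij s hi t hj)
      rw [this]; exact one_mem _

theorem dS_iSup_le {G ι : Type*} [Group G] (A : ι → Subgroup G)
    (hA : ∀ i j, i ≠ j → ∀ x ∈ A i, ∀ y ∈ A j, x * y = y * x) (n : ℕ) :
    dS (⨆ i, A i) n ≤ ⨆ i, dS (A i) n := by
  induction n with
  | zero => exact le_rfl
  | succ n ih =>
    refine (Subgroup.commutator_mono ih ih).trans ?_
    exact commutator_iSup_le (fun i => dS (A i) n)
      (fun i j hij x hx y hy => hA i j hij x (dS_le _ _ hx) y (dS_le _ _ hy))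

/-! ### The action -/

theorem ap_mul (g h : PermR) (x : ℝ) : ap (g * h) x = ap h (ap g x) := rfl
theorem ap_one (x : ℝ) : ap 1 x = x := rfl
theorem ap_inv_ap (g : PermR) (x : ℝ) : ap g⁻¹ (ap g x) = x := by
  rw [← ap_mul, mul_inv_cancel, ap_one]
theorem ap_ap_inv (g : PermR) (x : ℝ) : ap g (ap g⁻¹ x) = x := by
  rw [← ap_mul, inv_mul_cancel, ap_one]
theorem ap_inj (g : PermR) : Function.Injective (ap g) := g.unop.injective
theorem ap_ext {g h : PermR} (H : ∀ x, ap g x = ap h x) : g = h :=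
  MulOpposite.unop_injective (Equiv.ext H)

theorem comm_of_disj (g h : PermR) (H : ∀ x, ap g x = x ∨ ap h x = x) : g * h = h * g := by
  have : Equiv.Perm.Disjoint g.unop h.unop := H
  have := this.symm.commute.eq
  exact MulOpposite.unop_injective this

/-- The elements fixing everything outside `F`. -/
def fixOff (F : Set ℝ) : Subgroup PermR where
  carrier := {g | ∀ x ∉ F, ap g x = x}
  one_mem' := fun x _ => rfl
  mul_mem' := by
    intro a b ha hb x hx
    rw [ap_mul, ha x hx, hb x hx]
  inv_mem' := by
    intro a ha x hx
    have := ap_inv_ap a x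
    rwa [ha x hx] at this

theorem mem_fixOff {F : Set ℝ} {g : PermR} : g ∈ fixOff F ↔ ∀ x ∉ F, ap g x = x := Iff.rfl

theorem mem_fixOff_supp {F : Set ℝ} {g : PermR} : g ∈ fixOff F ↔ Supp g ⊆ F := by
  rw [mem_fixOff]
  constructor
  · intro h x hx
    by_contra hxF
    exact hx (h x hxF)
  · intro h x hx
    by_contra hne
    exact hx (h hne)

theorem fixOff_pres {F : Set ℝ} {g : PermR} (hg : g ∈ fixOff F) {x : ℝ} (hx : x ∈ F) :
    ap g x ∈ F := by
  by_contra h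
  have := hg _ h
  have h2 := ap_inj g this
  rw [h2] at h
  exact h hx

theorem dS_closure_insert (m : PermR) (F : Set ℝ) (B : Subgroup PermR) (hB : B ≤ fixOff F)
    (hF : ∀ k : ℤ, k ≠ 0 → ∀ x ∈ F, ap (m ^ k) x ∉ F) (n : ℕ) (hn : dS B n = ⊥) :
    dS (Subgroup.closure ((B : Set PermR) ∪ {m})) (n + 1) = ⊥ := by
  let A : ℤ → Subgroup PermR := fun k => B.map (MulAut.conj (m ^ k)).toMonoidHom
  have hcomm : ∀ i j, i ≠ j → ∀ x ∈ A i, ∀ y ∈ A j, x * y = y * x := by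
    intro i j hij x hx y hy
    obtain ⟨b, hb, rfl⟩ := hx
    obtain ⟨c, hc, rfl⟩ := hy
    apply comm_of_disj
    intro t
    simp only [MulEquiv.coe_toMonoidHom, MulAut.conj_apply, ap_mul]
    by_cases h1 : ap (m ^ i) t ∈ F
    · right
      have h2 : ap (m ^ j) t ∉ F := by
        have := hF (j - i) (by omega) _ h1
        rw [← ap_mul, ← zpow_add] at this
        simpa using this
      rw [hB hc _ h2, ap_inv_ap]
    · left
      rw [hB hb _ h1, ap_inv_ap]
  have h1 : ⁅Subgroup.closure ((B : Set PermR) ∪ {m}), Subgroup.closure ((B : Set PermR) ∪ {m})⁆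
      ≤ ⨆ k, A k := by
    have hBle : B ≤ ⨆ k, A k := by
      refine le_trans ?_ (le_iSup A 0)
      intro b hb
      exact ⟨b, hb, by simp⟩
    have hm : ∀ l : ℤ, ∀ x ∈ ⨆ k, A k, m ^ l * x * (m ^ l)⁻¹ ∈ ⨆ k, A k := by
      intro l x hx
      induction hx using Subgroup.iSup_induction' with
      | hp j x hx =>
        obtain ⟨b, hb, rfl⟩ := hx
        refine le_iSup A (l + j) ⟨b, hb, ?_⟩
        simp only [MulEquiv.coe_toMonoidHom, MulAut.conj_apply, zpow_add]
        group
      | h1 => simp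
      | hmul x y _ _ ihx ihy =>
        have := mul_mem ihx ihy
        convert this using 1; group
    apply commutator_closure_le
    · rintro s (hs | hs) x hx
      · have := hBle hs
        exact ⟨mul_mem (mul_mem this hx) (inv_mem this), mul_mem (mul_mem (inv_mem this) hx) this⟩
      · obtain rfl : s = m := hs
        exact ⟨by simpa using hm 1 x hx, by simpa using hm (-1) x hx⟩
    · rintro s (hs | hs) t (ht | ht)
      · exact hBle (Subgroup.commutator_le_self _ (Subgroup.commutator_mem_commutator hs ht))
      · obtain rfl : t = m := ht
        have := mul_mem (hBle hs) (hm 1 _ (inv_mem (hBle hs)))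
        convert this using 1
        simp only [commutatorElement_def, zpow_one]; group
      · obtain rfl : s = m := hs
        have := mul_mem (hm 1 _ (hBle ht)) (inv_mem (hBle ht))
        convert this using 1
        simp only [commutatorElement_def, zpow_one]
      · obtain rfl : s = m := hs
        obtain rfl : t = s := ht
        simp
  rw [dS_succ', eq_bot_iff]
  refine (dS_mono h1 n).trans ((dS_iSup_le A hcomm n).trans ?_)
  refine iSup_le fun k => ?_
  rw [dS_map, hn, Subgroup.map_bot]

/-- Elements preserving `F` which agree on `F` with an element of `L`. -/
def agree (F : Set ℝ) (L : Subgroup PermR) : Subgroup PermR where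
  carrier := {b | (∀ x, ap b x ∈ F ↔ x ∈ F) ∧ ∃ c ∈ L, ∀ x ∈ F, ap c x = ap b x}
  one_mem' := ⟨fun x => Iff.rfl, 1, one_mem _, fun x _ => rfl⟩
  mul_mem' := by
    rintro a b ⟨ha, c, hc, hca⟩ ⟨hb, d, hd, hdb⟩
    refine ⟨fun x => by rw [ap_mul, hb, ha], c * d, mul_mem hc hd, fun x hx => ?_⟩
    rw [ap_mul, ap_mul, hca x hx, hdb _ ((ha x).2 hx)]
  inv_mem' := by
    rintro a ⟨ha, c, hc, hca⟩
    have hi : ∀ x, ap a⁻¹ x ∈ F ↔ x ∈ F := fun x => by rw [← ha, ap_ap_inv]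
    refine ⟨hi, c⁻¹, inv_mem hc, fun x hx => ?_⟩
    apply ap_inj c
    rw [ap_ap_inv, hca _ ((hi x).2 hx), ap_ap_inv]

theorem agree_commutator (F : Set ℝ) (L : Subgroup PermR) :
    ⁅agree F L, agree F L⁆ ≤ agree F ⁅L, L⁆ := by
  have hmul : ∀ {a b c d : PermR}, (∀ x, ap a x ∈ F ↔ x ∈ F) → (∀ x ∈ F, ap c x = ap a x) →
      (∀ x ∈ F, ap d x = ap b x) → ∀ x ∈ F, ap (c * d) x = ap (a * b) x := by
    intro a b c d ha hca hdb x hx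
    rw [ap_mul, ap_mul, hca x hx, hdb _ ((ha x).2 hx)]
  have hinv : ∀ {a c : PermR}, (∀ x, ap a x ∈ F ↔ x ∈ F) → (∀ x ∈ F, ap c x = ap a x) →
      (∀ x, ap a⁻¹ x ∈ F ↔ x ∈ F) ∧ (∀ x ∈ F, ap c⁻¹ x = ap a⁻¹ x) := by
    intro a c ha hca
    have hi : ∀ x, ap a⁻¹ x ∈ F ↔ x ∈ F := fun x => by rw [← ha, ap_ap_inv]
    refine ⟨hi, fun x hx => ?_⟩
    apply ap_inj c
    rw [ap_ap_inv, hca _ ((hi x).2 hx), ap_ap_inv]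
  rw [Subgroup.commutator_le]
  rintro a ⟨ha, c, hc, hca⟩ b ⟨hb, d, hd, hdb⟩
  have hai := hinv ha hca
  have hbi := hinv hb hdb
  refine ⟨fun x => ?_, ⁅c, d⁆, Subgroup.commutator_mem_commutator hc hd, ?_⟩
  · simp only [commutatorElement_def, ap_mul]
    rw [hbi.1, hai.1, hb, ha]
  · simp only [commutatorElement_def]
    refine hmul (fun x => ?_) (hmul (fun x => ?_) (hmul ha hca hdb) hai.2) hbi.2
    · rw [ap_mul, ap_mul, hai.1, hb, ha]
    · rw [ap_mul, hb, ha]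

theorem dS_agree (m : PermR) (F : Set ℝ) (B K : Subgroup PermR) (hB : B ≤ fixOff F)
    (hF : ∀ k : ℤ, k ≠ 0 → ∀ x ∈ F, ap (m ^ k) x ∉ F) (hBK : B ≤ K) (hm : m ∈ K) (n : ℕ) :
    dS B n ≤ agree F (dS K (n + 1)) := by
  induction n with
  | zero =>
    intro b hb
    have hb' : b ∈ fixOff F := hB hb
    refine ⟨fun x => ⟨fun h => ?_, fixOff_pres hb'⟩, ⁅b, m⁆,
      Subgroup.commutator_mem_commutator (hBK hb) hm, fun x hx => ?_⟩
    · simpa [ap_inv_ap] using fixOff_pres (inv_mem hb') h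
    · simp only [commutatorElement_def, ap_mul]
      have h2 : ap m (ap b x) ∉ F := by
        simpa using hF 1 one_ne_zero _ (fixOff_pres hb' hx)
      rw [inv_mem hb' _ h2, ap_inv_ap]
  | succ n ih =>
    exact (Subgroup.commutator_mono ih ih).trans (agree_commutator F _)

theorem dS_ne_bot_succ (m : PermR) (F : Set ℝ) (B K : Subgroup PermR) (hB : B ≤ fixOff F)
    (hF : ∀ k : ℤ, k ≠ 0 → ∀ x ∈ F, ap (m ^ k) x ∉ F) (hBK : B ≤ K) (hm : m ∈ K) (n : ℕ)
    (hn : dS B n ≠ ⊥) : dS K (n + 1) ≠ ⊥ := by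
  intro h0
  apply hn
  rw [eq_bot_iff]
  intro b hb
  obtain ⟨_, c, hc, hcb⟩ := dS_agree m F B K hB hF hBK hm n hb
  rw [h0, Subgroup.mem_bot] at hc
  subst hc
  rw [Subgroup.mem_bot]
  apply ap_ext
  intro x
  by_cases hx : x ∈ F
  · exact (hcb x hx).symm
  · exact hB (dS_le _ _ hb) x hx

/-! ### Abstract nice sets -/

structure AbsNice (Z : Set PermR) : Prop where
  fin : Z.Finite
  ne : ∀ z ∈ Z, z ≠ 1
  tri : ∀ z ∈ Z, ∀ w ∈ Z, z ≠ w →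
    Disjoint (Supp z) (Supp w) ∨ Supp z ⊂ Supp w ∨ Supp w ⊂ Supp z
  fund : ∀ z ∈ Z, ∃ F : Set ℝ, (∀ k : ℤ, k ≠ 0 → ∀ x ∈ F, ap (z ^ k) x ∉ F) ∧
    ∀ w ∈ Z, Supp w ⊂ Supp z → Supp w ⊆ F

def Chain (C : Set PermR) : Prop := ∀ z ∈ C, ∀ w ∈ C, Supp z ⊆ Supp w ∨ Supp w ⊆ Supp z

theorem supp_ne {z : PermR} (h : z ≠ 1) : (Supp z).Nonempty := by
  by_contra hne
  rw [Set.not_nonempty_iff_eq_empty] at hne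
  apply h
  apply ap_ext
  intro x
  by_contra hx
  have : x ∈ Supp z := hx
  rw [hne] at this
  exact this

theorem AbsNice.inj {Z : Set PermR} (hZ : AbsNice Z) {z w : PermR} (hz : z ∈ Z) (hw : w ∈ Z)
    (h : Supp z = Supp w) : z = w := by
  by_contra hne
  rcases hZ.tri z hz w hw hne with h1 | h1 | h1
  · rw [h, disjoint_self] at h1
    have := supp_ne (hZ.ne w hw)
    rw [h1] at this
    simp at this
  · exact h1.ne h
  · exact h1.ne h.symm

theorem exists_max {C : Set PermR} (hC : C.Finite) {z : PermR} (hz : z ∈ C) :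
    ∃ m ∈ C, Supp z ⊆ Supp m ∧ ∀ w ∈ C, ¬ Supp m ⊂ Supp w := by
  obtain ⟨s, hs, hmax⟩ := (hC.image Supp).exists_le_maximal (Set.mem_image_of_mem Supp hz)
  obtain ⟨m, hm, rfl⟩ := hmax.prop
  exact ⟨m, hm, hs, fun w hw h => hmax.not_gt (Set.mem_image_of_mem Supp hw) h⟩

theorem upper {Z : Set PermR} (hZ : AbsNice Z) (n : ℕ) : ∀ Y ⊆ Z,
    (∀ C ⊆ Y, Chain C → C.ncard ≤ n) → dS (Subgroup.closure Y) n = ⊥ := by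
  induction n with
  | zero =>
    intro Y hY h
    have : Y = ∅ := by
      by_contra hne
      obtain ⟨y, hy⟩ := Set.nonempty_iff_ne_empty.2 hne
      have := h {y} (by simpa using hy) (by rintro z rfl w rfl; left; exact le_rfl)
      simp at this
    subst this
    exact Subgroup.closure_empty
  | succ n ih =>
    intro Y hY h
    let M : Set PermR := {m ∈ Y | ∀ w ∈ Y, ¬ Supp m ⊂ Supp w}
    let A : M → Subgroup PermR := fun m => Subgroup.closure {w ∈ Y | Supp w ⊆ Supp m.1}
    have hfix : ∀ m : M, A m ≤ fixOff (Supp m.1) := by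
      intro m
      rw [Subgroup.closure_le]
      rintro w ⟨_, hw⟩
      exact mem_fixOff_supp.2 hw
    have hcomm : ∀ i j, i ≠ j → ∀ x ∈ A i, ∀ y ∈ A j, x * y = y * x := by
      rintro i j hij x hx y hy
      have hd : Disjoint (Supp i.1) (Supp j.1) := by
        rcases hZ.tri i.1 (hY i.2.1) j.1 (hY j.2.1) (fun h => hij (Subtype.ext h)) with h1 | h1 | h1
        · exact h1
        · exact absurd h1 (i.2.2 _ j.2.1)
        · exact absurd h1 (j.2.2 _ i.2.1)
      apply comm_of_disj
      intro t
      by_cases ht : t ∈ Supp i.1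
      · right
        exact hfix j hy t (Set.disjoint_left.1 hd ht)
      · left
        exact hfix i hx t ht
    have hle : Subgroup.closure Y ≤ ⨆ m, A m := by
      rw [Subgroup.closure_le]
      intro y hy
      obtain ⟨m, hm, hym, hmax⟩ := exists_max (hZ.fin.subset hY) hy
      exact le_iSup A ⟨m, hm, hmax⟩ (Subgroup.subset_closure ⟨hy, hym⟩)
    rw [eq_bot_iff]
    refine (dS_mono hle _).trans ((dS_iSup_le A hcomm _).trans (iSup_le fun m => ?_))
    obtain ⟨m, hm, hmax⟩ := m
    obtain ⟨F, hF, hsub⟩ := hZ.fund m (hY hm)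
    let W : Set PermR := {w ∈ Y | Supp w ⊂ Supp m}
    have hWn : dS (Subgroup.closure W) n = ⊥ := by
      apply ih W (fun w hw => hY hw.1)
      intro C hC hch
      have hCf : C.Finite := hZ.fin.subset (fun w hw => hY (hC hw).1)
      have := h (insert m C) (by
        rintro w (rfl | hw)
        · exact hm
        · exact (hC hw).1) (by
        rintro z (rfl | hz) w (rfl | hw)
        · left; exact le_rfl
        · right; exact (hC hw).2.subset
        · left; exact (hC hz).2.subset
        · exact hch z hz w hw)
      rw [Set.ncard_insert_of_notMem (fun hmC => (hC hmC).2.ne rfl) hCf] at this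
      omega
    have hB : Subgroup.closure W ≤ fixOff F := by
      rw [Subgroup.closure_le]
      intro w hw
      exact mem_fixOff_supp.2 (hsub w (hY hw.1) hw.2)
    rw [← dS_closure_insert m F _ hB hF n hWn]
    apply dS_mono
    rw [Subgroup.closure_le]
    rintro w ⟨hw, hwm⟩
    apply Subgroup.subset_closure
    by_cases hwe : Supp w = Supp m
    · right
      exact hZ.inj (hY hw) (hY hm) hwe
    · left
      exact Subgroup.subset_closure ⟨hw, hwm.ssubset_of_ne hwe⟩

theorem lower {Z : Set PermR} (hZ : AbsNice Z) (n : ℕ) : ∀ C ⊆ Z, Chain C → C.ncard = n + 1 →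
    dS (Subgroup.closure C) n ≠ ⊥ := by
  induction n with
  | zero =>
    intro C hC _ hcard h
    obtain ⟨z, rfl⟩ := Set.ncard_eq_one.1 hcard
    have : z ∈ Subgroup.closure {z} := Subgroup.subset_closure rfl
    change Subgroup.closure {z} = ⊥ at h
    rw [h, Subgroup.mem_bot] at this
    exact hZ.ne z (hC rfl) this
  | succ n ih =>
    intro C hC hch hcard
    obtain ⟨z, hz⟩ : C.Nonempty := by
      apply Set.nonempty_of_ncard_ne_zero; omega
    obtain ⟨m, hm, -, hmax⟩ := exists_max (hZ.fin.subset hC) hz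
    obtain ⟨F, hF, hsub⟩ := hZ.fund m (hC hm)
    have hss : ∀ w ∈ C \ {m}, Supp w ⊂ Supp m := by
      rintro w ⟨hw, hwm⟩
      have hne : Supp w ≠ Supp m := fun h => hwm (hZ.inj (hC hw) (hC hm) h)
      rcases hch w hw m hm with h | h
      · exact h.ssubset_of_ne hne
      · exact absurd (h.ssubset_of_ne hne.symm) (hmax w hw)
    refine dS_ne_bot_succ m F (Subgroup.closure (C \ {m})) _ ?_ hF
      (Subgroup.closure_mono Set.sdiff_subset) (Subgroup.subset_closure hm) n ?_
    · rw [Subgroup.closure_le]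
      intro w hw
      exact mem_fixOff_supp.2 (hsub w (hC hw.1) (hss w hw))
    · apply ih _ (Set.sdiff_subset.trans hC) (fun z hz w hw => hch z hz.1 w hw.1)
      rw [Set.ncard_sdiff_singleton_of_mem hm]; omega

/-! ### From orbitals to supports -/

theorem exists_orbital {g : PermR} (hg : IsPL g) {x : ℝ} (hx : x ∈ Supp g) :
    ∃ a b, IsOrbital g a b ∧ x ∈ Ioo a b := by
  obtain ⟨hmono, hout, -⟩ := hg
  have hcont : Continuous (ap g) :=
    hmono.monotone.continuous_of_surjective g.unop.surjective
  have hclosed : IsClosed {y | ap g y = y} := isClosed_eq hcont continuous_id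
  have hx01 : x ∈ Ioo (0:ℝ) 1 := by
    by_contra h
    exact hx (hout x h)
  let P : Set ℝ := {y | ap g y = y} ∩ Iic x
  let Q : Set ℝ := {y | ap g y = y} ∩ Ici x
  have hP : IsClosed P := hclosed.inter isClosed_Iic
  have hQ : IsClosed Q := hclosed.inter isClosed_Ici
  have hPn : P.Nonempty := ⟨0, hout 0 (by simp), hx01.1.le⟩
  have hQn : Q.Nonempty := ⟨1, hout 1 (by simp), hx01.2.le⟩
  have hPb : BddAbove P := ⟨x, fun y hy => hy.2⟩
  have hQb : BddBelow Q := ⟨x, fun y hy => hy.2⟩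
  have ha := hP.csSup_mem hPn hPb
  have hb := hQ.csInf_mem hQn hQb
  have hax : sSup P < x := lt_of_le_of_ne ha.2 (fun h => hx (h ▸ ha.1))
  have hbx : x < sInf Q := lt_of_le_of_ne hb.2 (fun h => hx (h.symm ▸ hb.1))
  refine ⟨sSup P, sInf Q, ⟨hax.trans hbx, ?_, fun h => h ha.1, fun h => h hb.1⟩, hax, hbx⟩
  intro y hy hfix
  rcases le_total y x with h | h
  · exact absurd (le_csSup hPb ⟨hfix, h⟩) (not_le.2 hy.1)
  · exact absurd (csInf_le hQb ⟨hfix, h⟩) (not_le.2 hy.2)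

theorem supp_eq {Z : Set PermR} (hZ : IsNiceSet Z) (hPL : ∀ g ∈ Z, IsPL g) {z : PermR}
    (hz : z ∈ Z) {a b : ℝ} (h : IsOrbital z a b) : Supp z = Ioo a b := by
  apply Set.Subset.antisymm _ h.2.1
  intro x hx
  obtain ⟨c, d, hcd, hxcd⟩ := exists_orbital (hPL z hz) hx
  obtain ⟨rfl, rfl⟩ := (hZ.1 z hz).2 _ _ _ _ h hcd
  exact hxcd

theorem fund_aux {m : PermR} (hm : StrictMono (ap m)) (r : ℝ) (k : ℕ) (x : ℝ)
    (hx : x ∈ Ioo r (ap m r)) : ap (m ^ (k + 1)) x ∉ Ioo r (ap m r) := by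
  have hr : r < ap m r := hx.1.trans hx.2
  have : ap m r < ap (m ^ (k + 1)) x := by
    induction k with
    | zero => simpa using hm hx.1
    | succ k ih =>
      rw [pow_succ, ap_mul]
      exact hm (hr.trans ih)
  exact fun h => lt_asymm h.2 this

theorem fund_int {m : PermR} (hm : StrictMono (ap m)) (r : ℝ) (k : ℤ) (hk : k ≠ 0) (x : ℝ)
    (hx : x ∈ Ioo r (ap m r)) : ap (m ^ k) x ∉ Ioo r (ap m r) := by
  rcases lt_or_gt_of_ne hk with h | h
  · obtain ⟨n, rfl⟩ : ∃ n : ℕ, k = -((n : ℤ) + 1) := ⟨(-k - 1).toNat, by omega⟩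
    intro hy
    apply fund_aux hm r n _ hy
    rw [← ap_mul, ← zpow_natCast, ← zpow_add]
    simpa [ap_one] using hx
  · obtain ⟨n, rfl⟩ : ∃ n : ℕ, k = (n : ℤ) + 1 := ⟨(k - 1).toNat, by omega⟩
    have := fund_aux hm r n x hx
    rwa [← zpow_natCast, Nat.cast_add, Nat.cast_one] at this

theorem absNice {Z : Set PermR} (hfin : Z.Finite) (hZ : IsNiceSet Z) (hPL : ∀ g ∈ Z, IsPL g) :
    AbsNice Z := by
  refine ⟨hfin, ?_, ?_, ?_⟩
  · rintro z hz rfl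
    obtain ⟨⟨a, b, hab⟩, -⟩ := hZ.1 1 hz
    obtain ⟨x, hx⟩ := exists_between hab.1
    exact hab.2.1 hx rfl
  · have key : ∀ z ∈ Z, ∀ w ∈ Z, ∀ a b c d, IsOrbital z a b → IsOrbital w c d → a < c →
        Disjoint (Ioo a b) (Ioo c d) ∨ Ioo c d ⊂ Ioo a b := by
      intro z hz w hw a b c d hab hcd hac
      rcases le_or_gt b c with h | hcb
      · left
        rw [Set.disjoint_left]
        intro x hx hx'
        exact absurd (hx.2.trans_le h) (not_lt.2 hx'.1.le)
      · right
        obtain ⟨h1, h2⟩ := hZ.2.1 z hz w hw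
        have hdb : d ≤ b := by
          by_contra hbd
          exact h1 ⟨a, b, c, d, hab, hcd, hac, hcb, not_le.1 hbd⟩
        refine ⟨Ioo_subset_Ioo hac.le hdb, fun hsub => ?_⟩
        exact absurd (hsub ⟨hac, hcb⟩).1 (lt_irrefl _)
    intro z hz w hw hne
    obtain ⟨⟨a, b, hab⟩, -⟩ := hZ.1 z hz
    obtain ⟨⟨c, d, hcd⟩, -⟩ := hZ.1 w hw
    rw [supp_eq hZ hPL hz hab, supp_eq hZ hPL hw hcd]
    rcases lt_trichotomy a c with h | h | h
    · rcases key z hz w hw _ _ _ _ hab hcd h with h | h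
      · exact Or.inl h
      · exact Or.inr (Or.inr h)
    · subst h
      rcases lt_trichotomy b d with h | h | h
      · exact absurd ⟨a, d, b, hab.1, h, Or.inl ⟨hcd, hab⟩⟩ (hZ.2.1 w hw z hz).2
      · subst h
        exact absurd hcd (hZ.2.2.1 z hz w hw hne a b hab)
      · exact absurd ⟨a, b, d, hcd.1, h, Or.inl ⟨hab, hcd⟩⟩ (hZ.2.1 z hz w hw).2
    · rcases key w hw z hz _ _ _ _ hcd hab h with h | h
      · exact Or.inl h.symm
      · exact Or.inr (Or.inl h)
  · intro z hz
    obtain ⟨⟨a, b, hab⟩, -⟩ := hZ.1 z hz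
    obtain ⟨r, hr, hsub⟩ := hZ.2.2.2 z hz a b hab
    refine ⟨Ioo r (ap z r), fund_int (hPL z hz).1 r, ?_⟩
    intro w hw hss
    obtain ⟨⟨c, d, hcd⟩, -⟩ := hZ.1 w hw
    rw [supp_eq hZ hPL hz hab, supp_eq hZ hPL hw hcd] at hss
    rw [supp_eq hZ hPL hw hcd]
    exact hsub w hw c d hcd hss

theorem tower_of_chain {Z : Set PermR} (hfin : Z.Finite) (hZ : IsNiceSet Z)
    (hPL : ∀ g ∈ Z, IsPL g) {C : Set PermR} (hC : C ⊆ Z) (hch : Chain C) :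
    ∃ T : Set ((ℝ × ℝ) × PermR),
      T ⊆ SignedOrbitals Z ∧ IsTower T ∧ T.Finite ∧ T.ncard = C.ncard := by
  have hex : ∀ z : PermR, ∃ p : ℝ × ℝ, z ∈ Z → IsOrbital z p.1 p.2 := by
    intro z
    by_cases hz : z ∈ Z
    · obtain ⟨⟨a, b, hab⟩, -⟩ := hZ.1 z hz
      exact ⟨(a, b), fun _ => hab⟩
    · exact ⟨0, fun h => absurd h hz⟩
  choose f hf using hex
  refine ⟨(fun z => (f z, z)) '' C, ?_, ⟨?_, ?_, ?_⟩, (hfin.subset hC).image _, ?_⟩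
  · rintro _ ⟨z, hz, rfl⟩
    exact ⟨hC hz, hf z (hC hz)⟩
  · rintro _ ⟨z, hz, rfl⟩
    exact hf z (hC hz)
  · rintro _ ⟨z, hz, rfl⟩ _ ⟨w, hw, rfl⟩
    have := hch z hz w hw
    rwa [supp_eq hZ hPL (hC hz) (hf z (hC hz)), supp_eq hZ hPL (hC hw) (hf w (hC hw))] at this
  · rintro _ ⟨z, hz, rfl⟩ _ ⟨w, hw, rfl⟩ h
    change f z = f w at h
    change z = w
    by_contra hne
    refine hZ.2.2.1 z (hC hz) w (hC hw) hne _ _ (hf z (hC hz)) ?_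
    rw [h]
    exact hf w (hC hw)
  · exact Set.ncard_image_of_injective _ (fun z w h => congrArg Prod.snd h)

theorem chain_of_tower {Z : Set PermR} (hZ : IsNiceSet Z)
    (hPL : ∀ g ∈ Z, IsPL g) {T : Set ((ℝ × ℝ) × PermR)}
    (hT : T ⊆ SignedOrbitals Z) (hTt : IsTower T) :
    ∃ C ⊆ Z, Chain C ∧ C.ncard = T.ncard := by
  refine ⟨Prod.snd '' T, ?_, ?_, ?_⟩
  · rintro _ ⟨p, hp, rfl⟩
    exact (hT hp).1
  · rintro _ ⟨p, hp, rfl⟩ _ ⟨q, hq, rfl⟩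
    rw [supp_eq hZ hPL (hT hp).1 (hT hp).2, supp_eq hZ hPL (hT hq).1 (hT hq).2]
    exact hTt.2.1 p hp q hq
  · apply Set.ncard_image_of_injOn
    rintro ⟨⟨a, b⟩, z⟩ hp ⟨⟨c, d⟩, w⟩ hq h
    change z = w at h
    subst h
    obtain ⟨rfl, rfl⟩ := (hZ.1 z (hT hp).1).2 _ _ _ _ (hT hp).2 (hT hq).2
    rfl

theorem statement8 (Z : Set PermR) (hZfin : Z.Finite) (hZnice : IsNiceSet Z)
    (H : Subgroup PermR) (hH : H = Subgroup.closure Z)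
    (hPL : ∀ g ∈ H, IsPL g) :
    IsSolvable ↥H ∧
    derivedLength ↥H = sSup {n : ℕ | ∃ T : Set ((ℝ × ℝ) × PermR),
      T ⊆ SignedOrbitals Z ∧ IsTower T ∧ T.Finite ∧ T.ncard = n} := by
  have hPLZ : ∀ g ∈ Z, IsPL g := fun g hg => hPL g (hH ▸ Subgroup.subset_closure hg)
  have hA : AbsNice Z := absNice hZfin hZnice hPLZ
  subst hH
  set S : Set ℕ := {n : ℕ | ∃ T : Set ((ℝ × ℝ) × PermR),
      T ⊆ SignedOrbitals Z ∧ IsTower T ∧ T.Finite ∧ T.ncard = n} with hS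
  have hne : S.Nonempty := by
    obtain ⟨T, hT⟩ := tower_of_chain hZfin hZnice hPLZ (Set.empty_subset Z)
      (fun z hz => absurd hz (Set.notMem_empty z))
    exact ⟨_, T, hT.1, hT.2.1, hT.2.2.1, rfl⟩
  have hbdd : BddAbove S := by
    refine ⟨Z.ncard, ?_⟩
    rintro n ⟨T, hT, hTt, -, rfl⟩
    obtain ⟨C, hC, -, hcard⟩ := chain_of_tower hZnice hPLZ hT hTt
    rw [← hcard]
    exact Set.ncard_le_ncard hC hZfin
  have hup : derivedSeries (Subgroup.closure Z) (sSup S) = ⊥ := by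
    rw [dS_eq_bot_iff]
    apply upper hA _ Z le_rfl
    intro C hC hch
    obtain ⟨T, h1, h2, h3, h4⟩ := tower_of_chain hZfin hZnice hPLZ hC hch
    exact le_csSup hbdd ⟨T, h1, h2, h3, h4⟩
  refine ⟨⟨⟨_, hup⟩⟩, le_antisymm (Nat.sInf_le hup) ?_⟩
  refine le_csInf ⟨_, hup⟩ ?_
  intro n hn
  by_contra hlt
  rw [not_le] at hlt
  obtain ⟨T, hT, hTt, -, hcard⟩ := Nat.sSup_mem hne hbdd
  obtain ⟨C, hC, hch, hcard'⟩ := chain_of_tower hZnice hPLZ hT hTt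
  obtain ⟨k, hk⟩ : ∃ k, sSup S = k + 1 := ⟨sSup S - 1, by omega⟩
  apply lower hA k C hC hch (by rw [hcard', hcard, hk])
  have h1 : dS (Subgroup.closure Z) n = ⊥ := (dS_eq_bot_iff _ _).1 hn
  rw [eq_bot_iff, ← h1]
  exact (dS_mono (Subgroup.closure_mono hC) k).trans (dS_anti _ (by omega))

end PLPaper
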